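/- Any finite simplicial complex K that is homotopy equivalent to a k-dimensional sphere has at least k+2 maximal (principal) faces. -/

import Mathlib

/-- A (finite) simplicial complex is represented as a finite set of faces
(finite sets of natural-number vertices). -/
abbrev Cx : Type := Finset (Finset ℕ)

/-- `K` is a simplicial complex: closed under taking subsets of faces. -/
def IsComplex (K : Cx) : Prop := ∀ σ ∈ K, ∀ τ ⊆ σ, τ ∈ K

/-- Vertex set of a complex. -/
def verts (K : Cx) : Finset ℕ := K.sup id

/-- The full simplex on a vertex set `V` (all subsets). -/
def simplexOn (V : Finset ℕ) : Cx := V.powerset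

/-- The boundary of the simplex on `V` (all proper subsets). -/
def boundaryOn (V : Finset ℕ) : Cx := V.powerset.erase V

/-- Alexander dual of `K` relative to a ground vertex set `V`. -/
def dual (K : Cx) (V : Finset ℕ) : Cx := V.powerset.filter (fun σ => V \ σ ∉ K)

/-- Alexander dual of `K` relative to its own vertex set. -/
def dualSelf (K : Cx) : Cx := dual K (verts K)

/-- Iterated Alexander dual, each dual taken relative to the current vertex set. -/
def iterDual : ℕ → Cx → Cx
  | 0, K => K
  | m + 1, K => dualSelf (iterDual m K)

/-- Join of two complexes (on disjoint vertex sets). -/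
def join (K L : Cx) : Cx := (K ×ˢ L).image fun p => p.1 ∪ p.2

/-- Link of a face `σ` in `K`. -/
def link (σ : Finset ℕ) (K : Cx) : Cx :=
  K.filter fun τ => τ ∩ σ = ∅ ∧ τ ∪ σ ∈ K

/-- Star of a face `σ` in `K`. -/
def star (σ : Finset ℕ) (K : Cx) : Cx := K.filter fun τ => τ ∪ σ ∈ K

/-- Deletion of a vertex. -/
def del (v : ℕ) (K : Cx) : Cx := K.filter fun σ => v ∉ σ

/-- The facets (maximal = principal faces) of `K`. -/
def facets (K : Cx) : Cx := K.filter fun σ => ∀ τ ∈ K, σ ⊆ τ → σ = τ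

/-- Number of principal simplices. -/
def mCount (K : Cx) : ℕ := (facets K).card

/-- `K.sup card`, i.e. `dim K + 1`. -/
def topCard (K : Cx) : ℕ := K.sup Finset.card

/-- Dimension of a complex, as an integer (so that `dim {∅} = -1`). -/
def dimC (K : Cx) : ℤ := (topCard K : ℤ) - 1

/-- `L` is a top generated subcomplex of `K`. -/
def topGen (L K : Cx) : Prop := L ⊆ K ∧ facets L ⊆ facets K

/-- The boundary complex: generated by the ridges ((d-1)-faces) contained in
exactly one facet of top dimension. -/
def bd (K : Cx) : Cx :=
  (K.filter fun σ => σ.card + 1 = topCard K ∧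
    (K.filter fun τ => τ.card = topCard K ∧ σ ⊆ τ).card = 1).biUnion Finset.powerset

/-- Simplicial isomorphism of complexes. -/
def Iso (K L : Cx) : Prop :=
  ∃ f : ℕ → ℕ, Set.InjOn f ↑(verts K) ∧ K.image (Finset.image f) = L

/-- Elementary starring `(τ, a) K`: remove the faces containing `τ` and replace
`st(τ,K) = τ * lk(τ,K)` by `a * ∂τ * lk(τ,K)`. -/
def starringOp (τ : Finset ℕ) (a : ℕ) (K : Cx) : Cx :=
  K.filter (fun σ => ¬ τ ⊆ σ) ∪
    join (simplexOn {a}) (join (boundaryOn τ) (link τ K))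

/-- One stellar subdivision step. -/
inductive SubdivStep : Cx → Cx → Prop where
  | mk (K : Cx) (τ : Finset ℕ) (a : ℕ) : τ ∈ K → τ ≠ ∅ → a ∉ verts K →
      SubdivStep K (starringOp τ a K)

/-- `Subdiv K K'` : `K'` is obtained from `K` by stellar subdivisions. -/
def Subdiv : Cx → Cx → Prop := Relation.ReflTransGen SubdivStep

/-- Stellar equivalence (by Alexander's theorem, this is PL-isomorphism):
the equivalence relation generated by stellar subdivisions and simplicial
isomorphisms. -/
def StellarEquiv : Cx → Cx → Prop :=
  Relation.EqvGen (fun K L => SubdivStep K L ∨ Iso K L)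

/-- A combinatorial `d`-ball: a complex PL-isomorphic to the `d`-simplex. -/
def CombBall (d : ℕ) (B : Cx) : Prop :=
  StellarEquiv B (simplexOn (Finset.range (d + 1)))

/-- A combinatorial `d`-sphere: a complex PL-isomorphic to `∂Δ^{d+1}`. -/
def CombSphere (d : ℕ) (S : Cx) : Prop :=
  StellarEquiv S (boundaryOn (Finset.range (d + 2)))

/-- An elementary collapse step through a free face. -/
def CollapseStep (K L : Cx) : Prop :=
  ∃ σ τ : Finset ℕ, σ ∈ K ∧ τ ∈ K ∧ σ ⊆ τ ∧ σ.card + 1 = τ.card ∧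
    (∀ ρ ∈ K, σ ⊆ ρ → ρ = σ ∨ ρ = τ) ∧ L = K \ {σ, τ}

/-- Simplicial collapse. -/
def CollapsesTo : Cx → Cx → Prop := Relation.ReflTransGen CollapseStep

/-- A complex is collapsible if it has a (stellar) subdivision which collapses
to a single vertex. -/
def Collapsible (K : Cx) : Prop :=
  ∃ K', Subdiv K K' ∧ ∃ v : ℕ, CollapsesTo K' ({∅, {v}} : Cx)

mutual
/-- Non-homogeneous manifold of dimension `d` (inductive definition via links:
every vertex link is an NH-ball or an NH-sphere of smaller dimension; the
`(-1)`-dimensional NH-sphere is the complex `{∅}`). -/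
def NHManifold : ℕ → Cx → Prop
  | 0 => fun K => IsComplex K ∧ K.Nonempty ∧ topCard K = 1
  | (d + 1) => fun K => IsComplex K ∧ topCard K = d + 2 ∧
      ∀ v ∈ verts K,
        link {v} K = ({∅} : Cx) ∨
        (∃ k, ∃ _ : k ≤ d, NHBall k (link {v} K)) ∨
        (∃ k, ∃ _ : k ≤ d, ∃ j, ∃ _ : j ≤ k, NHSphereH k j (link {v} K))
  termination_by d => 3 * d
  decreasing_by all_goals omega

/-- Non-homogeneous ball of dimension `d`: a collapsible NH-manifold. -/
def NHBall : ℕ → Cx → Prop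
  | 0 => fun K => ∃ v : ℕ, K = ({∅, {v}} : Cx)
  | (d + 1) => fun K => NHManifold (d + 1) K ∧ Collapsible K
  termination_by d => 3 * d + 1
  decreasing_by all_goals omega

/-- Non-homogeneous sphere of dimension `d` and homotopy dimension `k`:
an NH-manifold `S` admitting a decomposition `S = B + L` with `B` a top
generated NH-ball of dimension `d`, `L` a top generated combinatorial
`k`-ball and `B ∩ L = ∂L`. -/
def NHSphereH : ℕ → ℕ → Cx → Prop
  | d, k => fun S => NHManifold d S ∧ ∃ B L : Cx,
      NHBall d B ∧ topGen B S ∧ CombBall k L ∧ topGen L S ∧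
      B ∪ L = S ∧ B ∩ L = bd L
  termination_by d k => 3 * d + 2
  decreasing_by all_goals omega
end

/-- `S = B + L` is a decomposition of the `d`-dimensional NH-sphere `S` of
homotopy dimension `k`. -/
def SphereDecomp (d k : ℕ) (S B L : Cx) : Prop :=
  NHManifold d S ∧ NHBall d B ∧ topGen B S ∧ CombBall k L ∧ topGen L S ∧
    B ∪ L = S ∧ B ∩ L = bd L

/-- A minimal NH-sphere of dimension `d`: an NH-sphere whose number of maximal
faces equals its homotopy dimension plus `2`. -/
def MinNHSphereD (d : ℕ) (S : Cx) : Prop :=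
  ∃ k : ℕ, NHSphereH d k S ∧ mCount S = k + 2

/-- A minimal NH-sphere (of any dimension, including the `(-1)`-sphere `{∅}`). -/
def MinNHSphere (S : Cx) : Prop :=
  S = ({∅} : Cx) ∨ ∃ d : ℕ, MinNHSphereD d S

/-- A minimal NH-ball of dimension `d`: an NH-ball `B` taking part in a
decomposition `S = B + L` of a minimal NH-sphere. -/
def MinNHBall (d : ℕ) (B : Cx) : Prop :=
  ∃ (k : ℕ) (S L : Cx), SphereDecomp d k S B L ∧ mCount S = k + 2

/-- The geometric realization of a complex, inside `ℝ^ℕ`: convex combinations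
supported on a face. -/
def realization (K : Cx) : Set (ℕ → ℝ) :=
  {f | ∃ σ ∈ K, (∀ i, i ∉ σ → f i = 0) ∧ (∀ i, 0 ≤ f i) ∧ ∑ i ∈ σ, f i = 1}

section Helpers

open MeasureTheory Metric Set

theorem poly_det {n : ℕ} (A : EuclideanSpace ℝ (Fin n) →L[ℝ] EuclideanSpace ℝ (Fin n)) :
    ∃ q : Polynomial ℝ, q.natDegree ≤ n ∧
      ∀ t : ℝ, q.eval t = (ContinuousLinearMap.id ℝ (EuclideanSpace ℝ (Fin n)) + t • A).det := by
  classical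
  let b := (EuclideanSpace.basisFun (Fin n) ℝ).toBasis
  let M := LinearMap.toMatrix b b (A : _ →ₗ[ℝ] _)
  refine ⟨Matrix.det ((Polynomial.X : Polynomial ℝ) • M.map Polynomial.C +
    (1 : Matrix (Fin n) (Fin n) ℝ).map Polynomial.C), ?_, ?_⟩
  · simpa using Polynomial.natDegree_det_X_add_C_le M 1
  · intro t
    have h1 : (ContinuousLinearMap.id ℝ (EuclideanSpace ℝ (Fin n)) + t • A).det
        = Matrix.det (1 + t • M) := by
      change LinearMap.det (LinearMap.id + t • (A : EuclideanSpace ℝ (Fin n) →ₗ[ℝ] _)) = _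
      rw [← LinearMap.det_toMatrix b]
      simp [M]
    rw [h1, ← Polynomial.coe_evalRingHom, RingHom.map_det]
    congr 1
    ext i j
    simp [Matrix.map_apply, Matrix.one_apply]
    by_cases h : i = j <;> simp [h] <;> ring

theorem interp {n : ℕ} (δ : ℝ) (hδ : 0 < δ) :
    ∃ (c v : Fin (n + 1) → ℝ), (∀ i, 0 ≤ v i ∧ v i ≤ δ) ∧ ∑ i, c i = 1 ∧
      ∀ q : Polynomial ℝ, q.natDegree ≤ n → q.eval 1 = ∑ i, c i * q.eval (v i) := by
  classical
  let v : Fin (n + 1) → ℝ := fun i => δ * (i : ℕ) / (n + 1)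
  have hv : Function.Injective v := by
    intro i j h
    have : (n : ℝ) + 1 ≠ 0 := by positivity
    simp only [v] at h
    field_simp at h
    exact Fin.ext (by exact_mod_cast h)
  have hvs : Set.InjOn v (Finset.univ : Finset (Fin (n + 1))) := hv.injOn
  refine ⟨fun i => (Lagrange.basis Finset.univ v i).eval 1, v, ?_, ?_, ?_⟩
  · intro i
    refine ⟨by positivity, ?_⟩
    have h1 : ((i : ℕ) : ℝ) ≤ n + 1 := by
      have := i.2
      exact_mod_cast this.le
    simp only [v]
    rw [div_le_iff₀ (by positivity)]
    nlinarith
  · rw [← Polynomial.eval_finsetSum, Lagrange.sum_basis hvs Finset.univ_nonempty]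
    simp
  · intro q hq
    have h := Lagrange.eq_interpolate (f := q) hvs (by
      rw [Finset.card_univ, Fintype.card_fin]
      refine lt_of_le_of_lt (Polynomial.degree_le_natDegree) ?_
      exact_mod_cast Nat.lt_succ_of_le hq)
    conv_lhs => rw [h]
    rw [Lagrange.interpolate_apply, Polynomial.eval_finsetSum]
    refine Finset.sum_congr rfl fun i _ => ?_
    simp [mul_comm]

theorem radial_lip {E : Type*} [NormedAddCommGroup E] [NormedSpace ℝ E] (x y : E) :
    ‖(max 1 ‖x‖)⁻¹ • x - (max 1 ‖y‖)⁻¹ • y‖ ≤ 2 * ‖x - y‖ := by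
  set a := max 1 ‖x‖
  set b := max 1 ‖y‖
  have ha : 1 ≤ a := le_max_left _ _
  have hb : 1 ≤ b := le_max_left _ _
  have hyb : ‖y‖ ≤ b := le_max_right _ _
  have hab : |b - a| ≤ ‖x - y‖ := by
    have h0 := abs_max_sub_max_le_abs ‖y‖ ‖x‖ 1
    rw [max_comm ‖y‖, max_comm ‖x‖] at h0
    refine h0.trans ?_
    rw [norm_sub_rev]
    exact abs_norm_sub_norm_le y x
  have e : a⁻¹ • x - b⁻¹ • y = a⁻¹ • (x - y) + (a⁻¹ - b⁻¹) • y := by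
    rw [smul_sub, sub_smul]; abel
  have h1 : a⁻¹ ≤ 1 := inv_le_one_of_one_le₀ ha
  have h2 : |a⁻¹ - b⁻¹| * ‖y‖ ≤ |b - a| := by
    have : a⁻¹ - b⁻¹ = (b - a) * (a⁻¹ * b⁻¹) := by field_simp
    rw [this, abs_mul, abs_of_pos (a := a⁻¹ * b⁻¹) (by positivity), mul_assoc]
    have : a⁻¹ * b⁻¹ * ‖y‖ ≤ 1 := by
      have : b⁻¹ * ‖y‖ ≤ 1 := by rw [inv_mul_le_iff₀ (by positivity)]; simpa
      rw [mul_assoc]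
      have h0 : 0 ≤ b⁻¹ * ‖y‖ := by positivity
      have : 0 ≤ a⁻¹ := by positivity
      nlinarith
    nlinarith [abs_nonneg (b - a)]
  rw [e]
  refine (norm_add_le _ _).trans ?_
  rw [norm_smul, norm_smul, Real.norm_of_nonneg (by positivity), Real.norm_eq_abs]
  nlinarith [norm_nonneg (x - y)]


theorem det_pos_small {E : Type*} [NormedAddCommGroup E] [NormedSpace ℝ E] [FiniteDimensional ℝ E]
    (A : E →L[ℝ] E) (hA : ‖A‖ < 1) : 0 < (ContinuousLinearMap.id ℝ E + A).det := by
  have hne : ∀ s ∈ Icc (0 : ℝ) 1, (ContinuousLinearMap.id ℝ E + s • A).det ≠ 0 := by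
    intro s hs h0
    have h1 := LinearMap.bot_lt_ker_of_det_eq_zero
      (f := ((ContinuousLinearMap.id ℝ E + s • A : E →L[ℝ] E) : E →ₗ[ℝ] E)) h0
    obtain ⟨x, hx, hx0⟩ := (Submodule.ne_bot_iff _).1 h1.ne'
    have hx1 : x + s • A x = 0 := hx
    have h2 : ‖x‖ = s * ‖A x‖ := by
      have h3 : ‖x‖ = ‖s • A x‖ := by
        conv_lhs => rw [eq_neg_of_add_eq_zero_left hx1, norm_neg]
      rw [h3, norm_smul, Real.norm_of_nonneg hs.1]
    have h3 := A.le_opNorm x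
    have h4 : 0 < ‖x‖ := norm_pos_iff.2 hx0
    have h5 : s * ‖A x‖ ≤ ‖A x‖ := by nlinarith [hs.2, norm_nonneg (A x)]
    nlinarith
  by_contra hcon
  push Not at hcon
  have hc : ContinuousOn (fun s : ℝ => (ContinuousLinearMap.id ℝ E + s • A).det) (Icc 0 1) := by
    apply Continuous.continuousOn
    exact ContinuousLinearMap.continuous_det.comp (by fun_prop)
  have := intermediate_value_Icc' (zero_le_one) hc
  obtain ⟨s, hs, hs0⟩ := this (a := 0) ⟨by simpa using hcon, by
    simp [ContinuousLinearMap.det]⟩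
  exact hne s hs hs0

theorem no_smooth_retraction {n : ℕ} (hn : 0 < n)
    (G : (EuclideanSpace ℝ (Fin n)) → (EuclideanSpace ℝ (Fin n))) (hG : ContDiff ℝ 1 G)
    (h1 : ∀ x, ‖G x‖ = 1) (h2 : ∀ x, ‖x‖ = 1 → G x = x) : False := by
  have : Nonempty (Fin n) := ⟨⟨0, hn⟩⟩
  let v : (EuclideanSpace ℝ (Fin n)) → (EuclideanSpace ℝ (Fin n)) := fun x => G x - x
  have hv : ContDiff ℝ 1 v := hG.sub contDiff_id
  have hvd : ∀ x, DifferentiableAt ℝ v x := fun x => hv.differentiable (by simp) x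
  have hGd : ∀ x, DifferentiableAt ℝ G x := fun x => hG.differentiable (by simp) x
  have hvc : Continuous (fderiv ℝ v) := hv.continuous_fderiv (by simp)
  -- bound on the derivative
  obtain ⟨C0, hC0⟩ := (isCompact_closedBall (0 : (EuclideanSpace ℝ (Fin n))) 1).exists_bound_of_continuousOn hvc.continuousOn
  obtain ⟨C, hC, hCpos⟩ : ∃ C : NNReal, (∀ x ∈ closedBall (0 : (EuclideanSpace ℝ (Fin n))) 1, ‖fderiv ℝ v x‖₊ ≤ C) ∧ 0 < C := by
    refine ⟨⟨max C0 1, by positivity⟩, fun x hx => ?_, ?_⟩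
    · exact (hC0 x hx).trans (le_max_left _ _)
    · exact lt_of_lt_of_le zero_lt_one (le_max_right C0 1)
  have hL : LipschitzOnWith C v (closedBall 0 1) :=
    Convex.lipschitzOnWith_of_nnnorm_fderiv_le (fun x _ => hvd x) hC (convex_closedBall _ _)
  let π : (EuclideanSpace ℝ (Fin n)) → (EuclideanSpace ℝ (Fin n)) := fun x => (max 1 ‖x‖)⁻¹ • x
  let u : (EuclideanSpace ℝ (Fin n)) → (EuclideanSpace ℝ (Fin n)) := fun x => v (π x)
  have hπmem : ∀ x, π x ∈ closedBall (0 : (EuclideanSpace ℝ (Fin n))) 1 := by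
    intro x
    simp only [π, mem_closedBall_zero_iff, norm_smul, norm_inv]
    rw [Real.norm_of_nonneg (by positivity), inv_mul_le_iff₀ (by positivity)]
    simp
  have hu_lip : ∀ x y, ‖u x - u y‖ ≤ 2 * C * ‖x - y‖ := by
    intro x y
    have := hL.dist_le_mul _ (hπmem x) _ (hπmem y)
    rw [dist_eq_norm, dist_eq_norm] at this
    refine this.trans ?_
    have h := radial_lip x y
    have : (C : ℝ) * ‖π x - π y‖ ≤ C * (2 * ‖x - y‖) := by gcongr
    linarith
  have hu_out : ∀ x, 1 ≤ ‖x‖ → u x = 0 := by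
    intro x hx
    have hp : ‖π x‖ = 1 := by
      simp only [π, norm_smul, norm_inv]
      rw [max_eq_right hx, norm_norm, inv_mul_cancel₀ (by positivity)]
    simp only [u, v]
    rw [h2 _ hp, sub_self]
  have hu_in : ∀ x ∈ ball (0 : (EuclideanSpace ℝ (Fin n))) 1, u x = v x := by
    intro x hx
    have : ‖x‖ ≤ 1 := (mem_ball_zero_iff.1 hx).le
    simp [u, π, max_eq_left this]
  let δ : ℝ := (4 * C)⁻¹
  have hCR : (0 : ℝ) < C := hCpos
  have hδ : 0 < δ := by positivity
  have hδC : δ * C = 1 / 4 := by simp only [δ]; field_simp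
  have key : ∀ t : ℝ, 0 ≤ t → t ≤ δ →
      ∫ x in ball (0 : (EuclideanSpace ℝ (Fin n))) 1, (ContinuousLinearMap.id ℝ (EuclideanSpace ℝ (Fin n)) + t • fderiv ℝ v x).det =
        (volume : Measure (EuclideanSpace ℝ (Fin n))).real (ball (0 : (EuclideanSpace ℝ (Fin n))) 1) := by
    intro t ht0 ht
    have htC : t * C ≤ 1 / 4 := by rw [← hδC]; gcongr
    let f : (EuclideanSpace ℝ (Fin n)) → (EuclideanSpace ℝ (Fin n)) := fun x => x + t • u x
    have hf : ApproximatesLinearOn f ((ContinuousLinearEquiv.refl ℝ (EuclideanSpace ℝ (Fin n)) : (EuclideanSpace ℝ (Fin n)) ≃L[ℝ] (EuclideanSpace ℝ (Fin n))) : (EuclideanSpace ℝ (Fin n)) →L[ℝ] (EuclideanSpace ℝ (Fin n)))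
        univ (1 / 2) := by
      intro x _ y _
      have : f x - f y - ((ContinuousLinearEquiv.refl ℝ (EuclideanSpace ℝ (Fin n)) : (EuclideanSpace ℝ (Fin n)) ≃L[ℝ] (EuclideanSpace ℝ (Fin n))) : (EuclideanSpace ℝ (Fin n)) →L[ℝ] (EuclideanSpace ℝ (Fin n))) (x - y)
          = t • (u x - u y) := by
        simp [f, smul_sub]; abel
      rw [this, norm_smul, Real.norm_of_nonneg ht0]
      have := hu_lip x y
      have h3 : t * ‖u x - u y‖ ≤ t * (2 * C * ‖x - y‖) := by gcongr
      have h4 : (t * C) * ‖x - y‖ ≤ 1 / 4 * ‖x - y‖ := by gcongr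
      have h5 : (((1 / 2 : NNReal)) : ℝ) = 1 / 2 := by simp
      rw [h5]
      linarith
    have hN : (1 / 2 : NNReal) < ‖((ContinuousLinearEquiv.refl ℝ (EuclideanSpace ℝ (Fin n))).symm : (EuclideanSpace ℝ (Fin n)) →L[ℝ] (EuclideanSpace ℝ (Fin n)))‖₊⁻¹ := by
      have : ‖((ContinuousLinearEquiv.refl ℝ (EuclideanSpace ℝ (Fin n))).symm : (EuclideanSpace ℝ (Fin n)) →L[ℝ] (EuclideanSpace ℝ (Fin n)))‖₊ = 1 := by
        have := ContinuousLinearMap.norm_id (𝕜 := ℝ) (E := EuclideanSpace ℝ (Fin n))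
        exact NNReal.eq this
      rw [this, inv_one]
      exact NNReal.half_lt_self one_ne_zero
    have hinj : Function.Injective f := by
      have := hf.injOn (Or.inr hN)
      exact injOn_univ.1 this
    have hsurj : Function.Surjective f := hf.surjective (Or.inr hN)
    have hfout : ∀ x, 1 ≤ ‖x‖ → f x = x := by
      intro x hx
      simp [f, hu_out x hx]
    have himg : f '' ball 0 1 = ball 0 1 := by
      ext y
      constructor
      · rintro ⟨x, hx, rfl⟩
        by_contra hcon
        rw [mem_ball_zero_iff, not_lt] at hcon
        have := hinj (hfout _ hcon)
        rw [this] at hcon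
        rw [mem_ball_zero_iff] at hx
        linarith
      · intro hy
        obtain ⟨x, rfl⟩ := hsurj y
        refine ⟨x, ?_, rfl⟩
        by_contra hcon
        rw [mem_ball_zero_iff, not_lt] at hcon
        rw [hfout x hcon, mem_ball_zero_iff] at hy
        linarith
    have hder : ∀ x ∈ ball (0 : (EuclideanSpace ℝ (Fin n))) 1, HasFDerivWithinAt f
        (ContinuousLinearMap.id ℝ (EuclideanSpace ℝ (Fin n)) + t • fderiv ℝ v x) (ball 0 1) x := by
      intro x hx
      have h3 : HasFDerivWithinAt (fun x => x + t • v x)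
          (ContinuousLinearMap.id ℝ (EuclideanSpace ℝ (Fin n)) + t • fderiv ℝ v x) (ball 0 1) x :=
        ((hasFDerivAt_id x).add ((hvd x).hasFDerivAt.const_smul t)).hasFDerivWithinAt
      refine h3.congr (fun y hy => ?_) ?_
      · simp [f, hu_in y hy]
      · simp [f, hu_in x hx]
    have hcv := integral_image_eq_integral_abs_det_fderiv_smul (volume : Measure (EuclideanSpace ℝ (Fin n)))
      measurableSet_ball hder hinj.injOn (fun _ => (1 : ℝ))
    rw [himg] at hcv
    rw [setIntegral_const, smul_eq_mul, mul_one] at hcv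
    rw [hcv]
    refine setIntegral_congr_fun measurableSet_ball fun x hx => ?_
    have : 0 < (ContinuousLinearMap.id ℝ (EuclideanSpace ℝ (Fin n)) + t • fderiv ℝ v x).det := by
      apply det_pos_small
      rw [norm_smul, Real.norm_of_nonneg ht0]
      have h6 : ‖fderiv ℝ v x‖ ≤ C := hC x (ball_subset_closedBall hx)
      have : t * ‖fderiv ℝ v x‖ ≤ t * C := by gcongr
      linarith
    simp [abs_of_pos this]
  obtain ⟨c, w, hw, hc, hq⟩ := interp (n := n) δ hδ
  have hdet0 : ∀ x, (ContinuousLinearMap.id ℝ (EuclideanSpace ℝ (Fin n)) + (1 : ℝ) • fderiv ℝ v x).det = 0 := by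
    intro x
    have e : ContinuousLinearMap.id ℝ (EuclideanSpace ℝ (Fin n)) + (1 : ℝ) • fderiv ℝ v x = fderiv ℝ G x := by
      have : fderiv ℝ v x = fderiv ℝ G x - ContinuousLinearMap.id ℝ (EuclideanSpace ℝ (Fin n)) :=
        ((hGd x).hasFDerivAt.sub (hasFDerivAt_id x)).fderiv
      rw [this]; simp
    rw [e]
    by_contra hne
    have hr := (LinearMap.isUnit_iff_range_eq_top (fderiv ℝ G x : (EuclideanSpace ℝ (Fin n)) →ₗ[ℝ] (EuclideanSpace ℝ (Fin n)))).1
      ((LinearMap.isUnit_iff_isUnit_det _).2 (isUnit_iff_ne_zero.2 hne))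
    have : G x ∈ (fderiv ℝ G x : (EuclideanSpace ℝ (Fin n)) →ₗ[ℝ] (EuclideanSpace ℝ (Fin n))).range := by rw [hr]; trivial
    obtain ⟨y, hy⟩ := this
    have hy : fderiv ℝ G x y = G x := hy
    have h3 : HasFDerivAt (fun x => inner ℝ (G x) (G x)) _ x :=
      (hGd x).hasFDerivAt.inner ℝ (hGd x).hasFDerivAt
    have h4 : (fun x => inner ℝ (G x) (G x)) = fun _ : (EuclideanSpace ℝ (Fin n)) => (1 : ℝ) := by
      ext z; rw [real_inner_self_eq_norm_sq, h1]; norm_num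
    rw [h4] at h3
    have h5 := h3.unique (hasFDerivAt_const (1 : ℝ) x)
    have h6 := congrArg (fun l : (EuclideanSpace ℝ (Fin n)) →L[ℝ] ℝ => l y) h5
    simp [hy] at h6
    have h7 := h1 x
    rw [h6] at h7
    simp at h7
  have hpt : ∀ x, (0 : ℝ) = ∑ i, c i * (ContinuousLinearMap.id ℝ (EuclideanSpace ℝ (Fin n)) + w i • fderiv ℝ v x).det := by
    intro x
    obtain ⟨q, hqn, hqe⟩ := poly_det (fderiv ℝ v x)
    have := hq q hqn
    simp only [hqe] at this
    rw [← this, hdet0]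
  have hintg : ∀ i, IntegrableOn
      (fun x => c i * (ContinuousLinearMap.id ℝ (EuclideanSpace ℝ (Fin n)) + w i • fderiv ℝ v x).det) (ball (0 : (EuclideanSpace ℝ (Fin n))) 1) := by
    intro i
    have hcont : Continuous (fun x => c i * (ContinuousLinearMap.id ℝ (EuclideanSpace ℝ (Fin n)) + w i • fderiv ℝ v x).det) :=
      continuous_const.mul (ContinuousLinearMap.continuous_det.comp
        (continuous_const.add (hvc.const_smul (w i))))
    exact (hcont.continuousOn.integrableOn_compact (isCompact_closedBall (0 : (EuclideanSpace ℝ (Fin n))) 1)).mono_set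
      ball_subset_closedBall
  have hfin : (0 : ℝ) = (volume : Measure (EuclideanSpace ℝ (Fin n))).real (ball (0 : (EuclideanSpace ℝ (Fin n))) 1) := by
    calc (0 : ℝ) = ∫ x in ball (0 : (EuclideanSpace ℝ (Fin n))) 1, (0 : ℝ) := by simp
      _ = ∫ x in ball (0 : (EuclideanSpace ℝ (Fin n))) 1,
            ∑ i, c i * (ContinuousLinearMap.id ℝ (EuclideanSpace ℝ (Fin n)) + w i • fderiv ℝ v x).det := by
          congr 1; ext x; exact hpt x
      _ = ∑ i, c i * ∫ x in ball (0 : (EuclideanSpace ℝ (Fin n))) 1,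
            (ContinuousLinearMap.id ℝ (EuclideanSpace ℝ (Fin n)) + w i • fderiv ℝ v x).det := by
          rw [integral_finsetSum _ (fun i _ => hintg i)]
          simp only [integral_const_mul]
      _ = ∑ i, c i * (volume : Measure (EuclideanSpace ℝ (Fin n))).real (ball (0 : (EuclideanSpace ℝ (Fin n))) 1) := by
          refine Finset.sum_congr rfl fun i _ => ?_
          rw [key _ (hw i).1 (hw i).2]
      _ = _ := by rw [← Finset.sum_mul, hc, one_mul]
  have hpos : 0 < (volume : Measure (EuclideanSpace ℝ (Fin n))).real (ball (0 : (EuclideanSpace ℝ (Fin n))) 1) :=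
    ENNReal.toReal_pos (measure_ball_pos _ _ one_pos).ne' measure_ball_lt_top.ne
  linarith

/-- Normalisation of a nowhere vanishing map. -/
noncomputable def nrm {X E : Type*} [TopologicalSpace X] [NormedAddCommGroup E] [NormedSpace ℝ E]
    (a : C(X, E)) (ha : ∀ x, a x ≠ 0) : C(X, sphere (0 : E) 1) where
  toFun x := ⟨‖a x‖⁻¹ • a x, by
    rw [mem_sphere_zero_iff_norm, norm_smul, norm_inv, norm_norm,
      inv_mul_cancel₀ (norm_ne_zero_iff.2 (ha x))]⟩
  continuous_toFun := by
    refine Continuous.subtype_mk ?_ _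
    exact ((a.continuous.norm).inv₀ (fun x => norm_ne_zero_iff.2 (ha x))).smul a.continuous

theorem nrm_homotopic {X E : Type*} [TopologicalSpace X] [NormedAddCommGroup E] [NormedSpace ℝ E]
    (a b : C(X, E)) (ha : ∀ x, a x ≠ 0) (hb : ∀ x, b x ≠ 0)
    (hab : ∀ x, ∀ t : ℝ, 0 ≤ t → t ≤ 1 → (1 - t) • a x + t • b x ≠ 0) :
    (nrm a ha).Homotopic (nrm b hb) := by
  let H : C(unitInterval × X, E) :=
    ⟨fun q => (1 - (q.1 : ℝ)) • a q.2 + (q.1 : ℝ) • b q.2, by fun_prop⟩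
  have hH : ∀ q, H q ≠ 0 := fun q => hab q.2 q.1 q.1.2.1 q.1.2.2
  refine ⟨⟨nrm H hH, fun x => ?_, fun x => ?_⟩⟩
  · apply Subtype.ext; simp [nrm, H]
  · apply Subtype.ext; simp [nrm, H]

theorem id_sphere_not_null (k : ℕ) :
    ¬ (ContinuousMap.id (sphere (0 : EuclideanSpace ℝ (Fin (k + 1))) 1)).Nullhomotopic := by
  rintro ⟨y, ⟨H⟩⟩
  let N : C({x : EuclideanSpace ℝ (Fin (k + 1)) // x ≠ 0}, sphere (0 : EuclideanSpace ℝ (Fin (k + 1))) 1) :=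
    nrm ⟨Subtype.val, continuous_subtype_val⟩ (fun x => x.2)
  let par : EuclideanSpace ℝ (Fin (k + 1)) → unitInterval := fun x => Set.projIcc 0 1 zero_le_one (2 - 4 * ‖x‖)
  have hpar : Continuous par := continuous_projIcc.comp (by fun_prop)
  classical
  let r : EuclideanSpace ℝ (Fin (k + 1)) → EuclideanSpace ℝ (Fin (k + 1)) :=
    fun x => if h : x = 0 then y else (H (par x, N ⟨x, h⟩) : sphere (0 : EuclideanSpace ℝ (Fin (k + 1))) 1)
  have hr1 : ∀ x, ‖r x‖ = 1 := by
    intro x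
    simp only [r]
    split_ifs
    · exact mem_sphere_zero_iff_norm.1 y.2
    · exact mem_sphere_zero_iff_norm.1 (Subtype.prop _)
  have hr_in : ∀ x, ‖x‖ ≤ 1 / 4 → r x = y := by
    intro x hx
    simp only [r]
    split_ifs with h
    · rfl
    · have : par x = 1 := Set.projIcc_of_right_le _ (by linarith)
      rw [this, H.apply_one]; rfl
  have hr_out : ∀ x, 1 / 2 ≤ ‖x‖ → r x = ‖x‖⁻¹ • x := by
    intro x hx
    have h : x ≠ 0 := by rintro rfl; norm_num at hx
    have : par x = 0 := Set.projIcc_of_le_left _ (by linarith)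
    simp only [r, dif_neg h, this, H.apply_zero]
    rfl
  have hr : Continuous r := by
    rw [continuous_iff_continuousAt]
    intro x
    by_cases hx : x = 0
    · have : r =ᶠ[nhds x] fun _ => (y : EuclideanSpace ℝ (Fin (k + 1))) := by
        filter_upwards [ball_mem_nhds x (show (0 : ℝ) < 1 / 4 by norm_num)] with z hz
        apply hr_in
        rw [hx, mem_ball_zero_iff] at hz
        exact hz.le
      exact continuousAt_const.congr this.symm
    · have hon : ContinuousOn r {x | x ≠ 0} := by
        rw [continuousOn_iff_continuous_domRestrict]
        have : ({x | x ≠ 0} : Set (EuclideanSpace ℝ (Fin (k + 1)))).domRestrict r = fun z => ((H (par z.1, N ⟨z.1, z.2⟩) : sphere (0 : EuclideanSpace ℝ (Fin (k + 1))) 1) : EuclideanSpace ℝ (Fin (k + 1))) := by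
          ext1 z
          have hz : z.1 ≠ 0 := z.2
          exact dif_neg hz
        rw [this]
        refine continuous_subtype_val.comp (H.continuous.comp ?_)
        exact (hpar.comp continuous_subtype_val).prodMk (N.continuous.comp continuous_id)
      exact hon.continuousAt (isOpen_ne.mem_nhds hx)
  have hsm : ContDiffOn ℝ 1 r {x | 1 / 2 < ‖x‖} := by
    have : ContDiffOn ℝ 1 (fun x : EuclideanSpace ℝ (Fin (k + 1)) => ‖x‖⁻¹ • x) {x | 1 / 2 < ‖x‖} := by
      intro x hx
      have h : x ≠ 0 := by rintro rfl; norm_num at hx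
      exact (((contDiffAt_norm ℝ h).inv (norm_ne_zero_iff.2 h)).smul contDiffAt_id).contDiffWithinAt
    exact this.congr fun x hx => hr_out x (le_of_lt hx)
  obtain ⟨F, hF, hFr, hFeq, -⟩ := hr.exists_contDiff_approx_and_eqOn 1 (ε := fun _ => 1 / 2)
    continuous_const (fun _ => by norm_num) (S := {x | 3 / 4 ≤ ‖x‖}) (U := {x | 1 / 2 < ‖x‖})
    (isClosed_le continuous_const continuous_norm)
    ((isOpen_lt continuous_const continuous_norm).mem_nhdsSet.2 (fun x hx => by
      simp only [mem_ofPred_eq] at hx ⊢; linarith)) hsm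
  have hF0 : ∀ x, F x ≠ 0 := by
    intro x h0
    have := hFr x
    rw [h0, dist_zero_left, hr1] at this
    norm_num at this
  have hF : ContDiff ℝ 1 F := hF
  refine no_smooth_retraction (Nat.succ_pos k) (fun x => ‖F x‖⁻¹ • F x) ?_ ?_ ?_
  · exact ((hF.norm ℝ hF0).inv (fun x => norm_ne_zero_iff.2 (hF0 x))).smul hF
  · intro x
    rw [norm_smul, norm_inv, norm_norm, inv_mul_cancel₀ (norm_ne_zero_iff.2 (hF0 x))]
  · intro x hx
    have : F x = x := by
      rw [hFeq (by simp only [mem_ofPred_eq]; linarith), hr_out x (by linarith), hx]; simp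
    simp [this, hx]

theorem exists_avoid {ι : Type*} [Fintype ι] {k : ℕ} (hι : Fintype.card ι ≤ k + 1)
    (P : (ι → ℝ) → EuclideanSpace ℝ (Fin (k + 1))) (hP : ContDiff ℝ 1 P) :
    ∃ v : EuclideanSpace ℝ (Fin (k + 1)), v ≠ 0 ∧
      ∀ y i j, y i = 0 → y j = 1 → ∀ t : ℝ, v ≠ t • P y := by
  classical
  let ext : ∀ i j : ι, ({l // l ≠ i} → ℝ) → ι → ℝ := fun i j z l =>
    if l = j then 1 else if h : l ≠ i then z ⟨l, h⟩ else 0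
  let Ψ : ∀ q : {q : ι × ι // q.2 ≠ q.1}, ({l // l ≠ q.1.1} → ℝ) → EuclideanSpace ℝ (Fin (k + 1)) :=
    fun q z => z ⟨q.1.2, q.2⟩ • P (ext q.1.1 q.1.2 z)
  have hΨ : ∀ q, ContDiff ℝ 1 (Ψ q) := by
    intro q
    refine (contDiff_apply ℝ ℝ _).smul (hP.comp ?_)
    rw [contDiff_pi]
    intro l
    simp only [ext]
    split_ifs
    · exact contDiff_const
    · exact contDiff_apply ℝ ℝ _
    · exact contDiff_const
  have hdim : dimH (⋃ q, range (Ψ q)) < Module.finrank ℝ (EuclideanSpace ℝ (Fin (k + 1))) := by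
    rw [dimH_iUnion, finrank_euclideanSpace_fin]
    refine lt_of_le_of_lt (b := (k : ENNReal)) (iSup_le fun q => ?_) (by exact_mod_cast Nat.lt_succ_self k)
    refine (hΨ q).dimH_range_le.trans ?_
    rw [Module.finrank_fintype_fun_eq_card]
    have : Fintype.card {l // l ≠ q.1.1} = Fintype.card ι - 1 := by
      rw [Fintype.card_subtype_compl]; simp
    rw [this]
    exact_mod_cast (by omega : Fintype.card ι - 1 ≤ k)
  have hd := dense_compl_of_dimH_lt_finrank hdim
  obtain ⟨v, hv0, hv⟩ := hd.exists_mem_open (isOpen_compl_singleton (x := (0 : EuclideanSpace ℝ (Fin (k + 1)))))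
    (by
      obtain ⟨x, hx⟩ := exists_ne (0 : EuclideanSpace ℝ (Fin (k + 1)))
      exact ⟨x, hx⟩)
  refine ⟨v, hv, ?_⟩
  rintro y i j hi hj t rfl
  have hij : j ≠ i := by rintro rfl; rw [hi] at hj; norm_num at hj
  apply hv0
  refine mem_iUnion.2 ⟨⟨(i, j), hij⟩, fun l => if l.1 = j then t else y l.1, ?_⟩
  simp only [Ψ, if_true]
  congr 2
  ext l
  simp only [ext]
  split_ifs with h1 h2
  · rw [h1, hj]
  · rfl
  · push Not at h2
    rw [h2, hi]

theorem null_of_cube {X ι : Type*} [TopologicalSpace X] [CompactSpace X] [Fintype ι] {k : ℕ}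
    (hι : Fintype.card ι ≤ k + 1) (p : C(X, ι → ℝ)) (hp : ∀ x, ∃ i j, p x i = 0 ∧ p x j = 1)
    (φ : C(range p, sphere (0 : EuclideanSpace ℝ (Fin (k + 1))) 1))
    (f : C(X, sphere (0 : EuclideanSpace ℝ (Fin (k + 1))) 1))
    (hf : ∀ x, f x = φ ⟨p x, mem_range_self x⟩) : f.Nullhomotopic := by
  have hcl : IsClosed (range p) := (isCompact_range p.continuous).isClosed
  obtain ⟨Φ, hΦ⟩ := ContinuousMap.exists_restrict_eq hcl
    ((⟨Subtype.val, continuous_subtype_val⟩ :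
      C(sphere (0 : EuclideanSpace ℝ (Fin (k + 1))) 1, EuclideanSpace ℝ (Fin (k + 1)))).comp φ)
  obtain ⟨P, hP, hPd, -⟩ := Φ.continuous.exists_contDiff_approx 1 (ε := fun _ => 1 / 2)
    continuous_const (fun _ => by norm_num)
  have hP : ContDiff ℝ 1 P := hP
  obtain ⟨v, hv0, hv⟩ := exists_avoid hι P hP
  have hd : ∀ x, ‖(f x : EuclideanSpace ℝ (Fin (k + 1))) - P (p x)‖ < 1 / 2 := by
    intro x
    have h1 := hPd (p x)
    have h2 : Φ (p x) = (f x : EuclideanSpace ℝ (Fin (k + 1))) := by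
      have := congrArg (fun g => g ⟨p x, mem_range_self x⟩) hΦ
      rw [hf]
      exact this
    rwa [h2, dist_comm, dist_eq_norm] at h1
  have hf1 : ∀ x, ‖(f x : EuclideanSpace ℝ (Fin (k + 1)))‖ = 1 := fun x =>
    mem_sphere_zero_iff_norm.1 (f x).2
  let a : C(X, EuclideanSpace ℝ (Fin (k + 1))) := ⟨fun x => f x, by fun_prop⟩
  let b : C(X, EuclideanSpace ℝ (Fin (k + 1))) := ⟨fun x => P (p x), hP.continuous.comp p.continuous⟩
  let c : C(X, EuclideanSpace ℝ (Fin (k + 1))) := ContinuousMap.const X v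
  have hab : ∀ x, ∀ t : ℝ, 0 ≤ t → t ≤ 1 → (1 - t) • a x + t • b x ≠ 0 := by
    intro x t h0 h1 h
    have e : a x = t • (a x - b x) := by
      rw [sub_smul, one_smul] at h
      rw [smul_sub, ← sub_eq_zero, ← h]; abel
    have h2 := congrArg norm e
    rw [norm_smul, Real.norm_of_nonneg h0] at h2
    have h3 : ‖a x‖ = 1 := hf1 x
    have h4 : ‖a x - b x‖ < 1 / 2 := hd x
    nlinarith [norm_nonneg (a x - b x)]
  have ha : ∀ x, a x ≠ 0 := fun x h => by simpa [h] using hab x 0 le_rfl zero_le_one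
  have hb : ∀ x, b x ≠ 0 := fun x h => by simpa [h] using hab x 1 zero_le_one le_rfl
  have hbc : ∀ x, ∀ t : ℝ, 0 ≤ t → t ≤ 1 → (1 - t) • b x + t • c x ≠ 0 := by
    intro x t h0 h1 h
    by_cases ht : t = 0
    · simp [ht] at h; exact hb x h
    · obtain ⟨i, j, hi, hj⟩ := hp x
      refine hv (p x) i j hi hj (-(t⁻¹ * (1 - t))) ?_
      have h5 : t • v = -((1 - t) • P (p x)) := eq_neg_of_add_eq_zero_right h
      calc v = t⁻¹ • (t • v) := by rw [smul_smul, inv_mul_cancel₀ ht, one_smul]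
        _ = _ := by rw [h5, smul_neg, smul_smul, neg_smul]
  have e1 : f = nrm a ha := by
    ext1 x
    apply Subtype.ext
    simp [nrm, a]
  have e2 : nrm c (fun _ => hv0) = ContinuousMap.const X (nrm (ContinuousMap.const Unit v) (fun _ => hv0) ()) := by
    ext1 x; rfl
  have h6 := nrm_homotopic b c hb (fun _ => hv0) hbc
  rw [e2] at h6
  rw [e1]
  exact ⟨_, (nrm_homotopic a b ha hb hab).trans h6⟩

theorem mem_facet (K : Cx) (σ : Finset ℕ) (hσ : σ ∈ K) : ∃ F ∈ facets K, σ ⊆ F := by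
  classical
  obtain ⟨F, hF, hmax⟩ := Finset.exists_max_image (K.filter (fun τ => σ ⊆ τ)) Finset.card
    ⟨σ, by simp [hσ]⟩
  rw [Finset.mem_filter] at hF
  refine ⟨F, ?_, hF.2⟩
  unfold facets
  rw [Finset.mem_filter]
  refine ⟨hF.1, fun τ hτ hFτ => ?_⟩
  exact Finset.eq_of_subset_of_card_le hFτ
    (hmax τ (Finset.mem_filter.2 ⟨hτ, hF.2.trans hFτ⟩))

theorem mem_realization_of_superset (K : Cx) (σ τ : Finset ℕ) (hτ : τ ∈ K) (hστ : σ ⊆ τ)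
    (f : ℕ → ℝ) (h0 : ∀ i, i ∉ σ → f i = 0) (h1 : ∑ i ∈ σ, f i = 1) :
    τ ∈ K ∧ (∀ i, i ∉ τ → f i = 0) ∧ ∑ i ∈ τ, f i = 1 := by
  refine ⟨hτ, fun i hi => h0 i (fun h => hi (hστ h)), ?_⟩
  rw [← h1]
  exact (Finset.sum_subset hστ (fun i _ hi => h0 i hi)).symm

theorem sub_verts (K : Cx) (σ : Finset ℕ) (hσ : σ ∈ K) : σ ⊆ verts K :=
  Finset.le_sup (f := id) hσ

theorem realization_compact (K : Cx) : IsCompact (realization K) := by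
  have hU : realization K = ⋃ σ ∈ K, {f : ℕ → ℝ | (∀ i, i ∉ σ → f i = 0) ∧ (∀ i, 0 ≤ f i) ∧
      ∑ i ∈ σ, f i = 1} := by
    ext f
    simp [realization]
    constructor
    · rintro ⟨σ, h1, h2, h3, h4⟩
      exact ⟨σ, h2, h3, h1, h4⟩
    · rintro ⟨σ, h1, h2, h3, h4⟩
      exact ⟨σ, h3, h1, h2, h4⟩
  rw [hU]
  refine K.isCompact_biUnion fun σ _ => ?_
  refine IsCompact.of_isClosed_subset
    (isCompact_univ_pi (fun _ : ℕ => (isCompact_Icc : IsCompact (Icc (0 : ℝ) 1)))) ?_ ?_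
  · have e : {f : ℕ → ℝ | (∀ i, i ∉ σ → f i = 0) ∧ (∀ i, 0 ≤ f i) ∧ ∑ i ∈ σ, f i = 1} =
      (⋂ i, ⋂ (_ : i ∉ σ), {f : ℕ → ℝ | f i = 0}) ∩ ((⋂ i, {f : ℕ → ℝ | 0 ≤ f i}) ∩
        {f : ℕ → ℝ | ∑ i ∈ σ, f i = 1}) := by
      ext f; simp
    rw [e]
    refine IsClosed.inter ?_ (IsClosed.inter ?_ ?_)
    · exact isClosed_iInter fun i => isClosed_iInter fun _ =>
        isClosed_eq (continuous_apply i) continuous_const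
    · exact isClosed_iInter fun i => isClosed_le continuous_const (continuous_apply i)
    · exact isClosed_eq (continuous_finsetSum _ fun i _ => continuous_apply i) continuous_const
  · rintro f ⟨h0, hp, h1⟩ i -
    refine ⟨hp i, ?_⟩
    by_cases hi : i ∈ σ
    · rw [← h1]
      exact Finset.single_le_sum (fun j _ => hp j) hi
    · rw [h0 i hi]; exact zero_le_one

theorem homotopic_of_common_face (K : Cx) (g : C(realization K, realization K))
    (hg : ∀ x, ∃ σ ∈ K, ((∀ i, i ∉ σ → x.1 i = 0) ∧ ∑ i ∈ σ, x.1 i = 1) ∧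
      ((∀ i, i ∉ σ → (g x).1 i = 0) ∧ ∑ i ∈ σ, (g x).1 i = 1)) :
    (ContinuousMap.id (realization K)).Homotopic g := by
  have hpos : ∀ (x : realization K) i, 0 ≤ x.1 i := by
    rintro ⟨x, σ, _, _, h, _⟩ i
    exact h i
  refine ⟨⟨⟨fun q => ⟨fun i => (1 - (q.1 : ℝ)) * q.2.1 i + q.1 * (g q.2).1 i, ?_⟩, ?_⟩, ?_, ?_⟩⟩
  · obtain ⟨σ, hσ, ⟨h1, h2⟩, h3, h4⟩ := hg q.2
    refine ⟨σ, hσ, fun i hi => ?_, fun i => ?_, ?_⟩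
    · beta_reduce
      rw [h1 i hi, h3 i hi]; simp
    · beta_reduce
      have := hpos q.2 i
      have := hpos (g q.2) i
      have := q.1.2.1
      have := sub_nonneg.2 q.1.2.2
      positivity
    · beta_reduce
      rw [Finset.sum_add_distrib, ← Finset.mul_sum, ← Finset.mul_sum, h2, h4]; ring
  · refine Continuous.subtype_mk (continuous_pi fun i => ?_) _
    have h1 : Continuous fun q : unitInterval × realization K => q.2.1 i :=
      (continuous_apply i).comp (continuous_subtype_val.comp continuous_snd)
    have h2 : Continuous fun q : unitInterval × realization K => (g q.2).1 i :=
      (continuous_apply i).comp (continuous_subtype_val.comp (g.continuous.comp continuous_snd))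
    have h3 : Continuous fun q : unitInterval × realization K => (q.1 : ℝ) :=
      continuous_subtype_val.comp continuous_fst
    exact ((continuous_const.sub h3).mul h1).add (h3.mul h2)
  · intro x; apply Subtype.ext; simp
  · intro x; apply Subtype.ext; simp

theorem null_of_cone (K : Cx) (hK : IsComplex K) (a : ℕ) (ha : ∀ F ∈ facets K, a ∈ F)
    {Y : Type*} [TopologicalSpace Y] (x0 : realization K)
    (f : C(realization K, Y)) : f.Nullhomotopic := by
  have hface : ∀ x : realization K, ∃ F ∈ K, a ∈ F ∧
      ((∀ i, i ∉ F → x.1 i = 0) ∧ ∑ i ∈ F, x.1 i = 1) := by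
    rintro ⟨x, σ, hσ, h0, hp, h1⟩
    obtain ⟨F, hF, hσF⟩ := mem_facet K σ hσ
    have hFK : F ∈ K := (Finset.mem_filter.1 hF).1
    exact ⟨F, hFK, ha F hF, (mem_realization_of_superset K σ F hFK hσF x h0 h1).2⟩
  obtain ⟨F, hF, haF, -⟩ := hface x0
  let e : realization K := ⟨fun i => if i = a then 1 else 0, F, hF, by
    intro i hi
    have : i ≠ a := by rintro rfl; exact hi haF
    simp [this], by intro i; beta_reduce; split_ifs <;> norm_num, by simp [haF]⟩
  have h := homotopic_of_common_face K (ContinuousMap.const _ e) (by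
    intro x
    obtain ⟨F, hF, haF, hx⟩ := hface x
    refine ⟨F, hF, hx, ?_, ?_⟩
    · intro i hi
      have : i ≠ a := by rintro rfl; exact hi haF
      simp [e, this]
    · simp [e, haF])
  exact ⟨f e, ContinuousMap.Homotopic.comp (ContinuousMap.Homotopic.refl f) h⟩

theorem null_of_few (K : Cx) (k : ℕ) (hK : IsComplex K) (hm : mCount K ≤ k + 1)
    (hno : ∀ a, ∃ F ∈ facets K, a ∉ F)
    (f : C(realization K, sphere (0 : EuclideanSpace ℝ (Fin (k + 1))) 1)) : f.Nullhomotopic := by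
  classical
  have : CompactSpace (realization K) := isCompact_iff_compactSpace.1 (realization_compact K)
  let ι := {F // F ∈ facets K}
  have hcard : Fintype.card ι = mCount K := by simp [ι, mCount]
  have hpos : ∀ (x : realization K) i, 0 ≤ x.1 i := by
    rintro ⟨x, σ, _, _, h, _⟩ i
    exact h i
  have hsum : ∀ (x : realization K), ∑ i ∈ verts K, x.1 i = 1 := by
    rintro ⟨x, σ, hσ, h0, _, h⟩
    exact (Finset.sum_subset (sub_verts K σ hσ) (fun i _ hi => h0 i hi)).symm.trans h
  have hsupp : ∀ (x : realization K) i, i ∉ verts K → x.1 i = 0 := by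
    rintro ⟨x, σ, hσ, h0, _, h⟩ i hi
    exact h0 i (fun h' => hi (sub_verts K σ hσ h'))
  have hFv : ∀ F : ι, F.1 ⊆ verts K := fun F =>
    sub_verts K F.1 (Finset.mem_filter.1 F.2).1
  have hFK : ∀ F : ι, F.1 ∈ K := fun F => (Finset.mem_filter.1 F.2).1
  have hw1 : ∀ (x : realization K) (F : ι), 1 - ∑ i ∈ F.1, x.1 i =
      ∑ i ∈ verts K, if i ∈ F.1 then 0 else x.1 i := by
    intro x F
    have e1 : ∑ i ∈ F.1, x.1 i = ∑ i ∈ verts K, if i ∈ F.1 then x.1 i else 0 := by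
      rw [Finset.sum_ite_mem, Finset.inter_eq_right.2 (hFv F)]
    rw [e1, ← hsum x, ← Finset.sum_sub_distrib]
    refine Finset.sum_congr rfl fun i _ => ?_
    split_ifs <;> simp
  have hwle : ∀ (x : realization K) (F : ι), ∑ i ∈ F.1, x.1 i ≤ 1 := by
    intro x F
    have := hw1 x F
    have h2 : 0 ≤ ∑ i ∈ verts K, if i ∈ F.1 then 0 else x.1 i :=
      Finset.sum_nonneg fun i _ => by split_ifs; exacts [le_rfl, hpos x i]
    linarith
  -- if the weight of `F` is one then `x` is supported on `F`
  have hw_supp : ∀ (x : realization K) (F : ι), ∑ i ∈ F.1, x.1 i = 1 → ∀ i, i ∉ F.1 → x.1 i = 0 := by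
    intro x F h i hi
    by_cases hiv : i ∈ verts K
    · have h1 := hw1 x F
      rw [h, sub_self] at h1
      have h2 := (Finset.sum_eq_zero_iff_of_nonneg (fun i _ => by
        split_ifs; exacts [le_rfl, hpos x i])).1 h1.symm i hiv
      simpa [hi] using h2
    · exact hsupp x i hiv
  have hex : ∀ x : realization K, ∃ F : ι, ∑ i ∈ F.1, x.1 i = 1 := by
    rintro ⟨x, σ, hσ, h0, hp, h1⟩
    obtain ⟨F, hF, hσF⟩ := mem_facet K σ hσ
    exact ⟨⟨F, hF⟩, (mem_realization_of_superset K σ F (hFK ⟨F, hF⟩) hσF x h0 h1).2.2⟩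
  let p : C(realization K, ι → ℝ) :=
    ⟨fun x F => max 0 (1 - (Fintype.card ι : ℝ) * (1 - ∑ i ∈ F.1, x.1 i)), by
      refine continuous_pi fun F => ?_
      refine continuous_const.max (continuous_const.sub (continuous_const.mul
        (continuous_const.sub (continuous_finsetSum _ fun i _ => ?_))))
      exact (continuous_apply i).comp continuous_subtype_val⟩
  have hp_def : ∀ x F, p x F = max 0 (1 - (Fintype.card ι : ℝ) * (1 - ∑ i ∈ F.1, x.1 i)) :=
    fun _ _ => rfl
  have hp_le : ∀ x F, p x F ≤ 1 := by
    intro x F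
    rw [hp_def]
    refine max_le zero_le_one ?_
    have := hwle x F
    have : 0 ≤ (Fintype.card ι : ℝ) * (1 - ∑ i ∈ F.1, x.1 i) :=
      mul_nonneg (by positivity) (by linarith)
    linarith
  have hp_one : ∀ x F, p x F = 1 ↔ ∑ i ∈ F.1, x.1 i = 1 := by
    intro x F
    have hc : (0 : ℝ) < Fintype.card ι := by
      have : 0 < Fintype.card ι := Fintype.card_pos_iff.2 ⟨F⟩
      exact_mod_cast this
    constructor
    · intro h
      rw [hp_def] at h
      rcases max_choice (0 : ℝ) (1 - (Fintype.card ι : ℝ) * (1 - ∑ i ∈ F.1, x.1 i)) with h' | h'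
      · rw [h'] at h; norm_num at h
      · rw [h'] at h
        have : (Fintype.card ι : ℝ) * (1 - ∑ i ∈ F.1, x.1 i) = 0 := by linarith
        rcases mul_eq_zero.1 this with h3 | h3
        · linarith
        · linarith
    · intro h
      rw [hp_def, h]; simp
  have hp : ∀ x, ∃ i j, p x i = 0 ∧ p x j = 1 := by
    intro x
    obtain ⟨j, hj⟩ := hex x
    have hc : (0 : ℝ) < Fintype.card ι := by
      have : 0 < Fintype.card ι := Fintype.card_pos_iff.2 ⟨j⟩
      exact_mod_cast this
    suffices ∃ i, p x i = 0 by
      obtain ⟨i, hi⟩ := this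
      exact ⟨i, j, hi, (hp_one x j).2 hj⟩
    by_contra hcon
    push Not at hcon
    have h1 : ∀ F : ι, (Fintype.card ι : ℝ) * (1 - ∑ i ∈ F.1, x.1 i) < 1 := by
      intro F
      by_contra h
      push Not at h
      apply hcon F
      rw [hp_def]
      exact max_eq_left (by linarith)
    have h2 : ∑ F : ι, (Fintype.card ι : ℝ) * (1 - ∑ i ∈ F.1, x.1 i) < ∑ F : ι, (1 : ℝ) :=
      Finset.sum_lt_sum_of_nonempty ⟨j, Finset.mem_univ _⟩ fun F _ => h1 F
    rw [← Finset.mul_sum, Finset.sum_const, Finset.card_univ, nsmul_eq_mul] at h2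
    have h3 : ∑ F : ι, (1 - ∑ i ∈ F.1, x.1 i) < 1 := lt_of_mul_lt_mul_left h2 hc.le
    have h4 : (1 : ℝ) ≤ ∑ F : ι, (1 - ∑ i ∈ F.1, x.1 i) := by
      simp only [hw1]
      rw [Finset.sum_comm, ← hsum x]
      refine Finset.sum_le_sum fun i _ => ?_
      obtain ⟨F, hF, hiF⟩ := hno i
      have := Finset.single_le_sum (f := fun F : ι => if i ∈ F.1 then (0 : ℝ) else x.1 i)
        (fun F _ => by split_ifs; exacts [le_rfl, hpos x i]) (Finset.mem_univ (⟨F, hF⟩ : ι))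
      beta_reduce at this
      rw [if_neg hiF] at this
      exact this
    linarith
  let α : (ι → ℝ) → ℕ → ℝ := fun y i => if i ∈ verts K then
    ∏ F : ι, (if i ∈ F.1 then 1 else 1 - y F) else 0
  let A : (ι → ℝ) → ℝ := fun y => ∑ i ∈ verts K, α y i
  have hαc : ∀ i, Continuous fun y => α y i := by
    intro i
    simp only [α]
    split_ifs
    · refine continuous_finsetProd _ fun F _ => ?_
      split_ifs
      · exact continuous_const
      · exact continuous_const.sub (continuous_apply F)
    · exact continuous_const
  have hAc : Continuous A := continuous_finsetSum _ fun i _ => hαc i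
  have hα0 : ∀ x i, 0 ≤ α (p x) i := by
    intro x i
    simp only [α]
    split_ifs
    · refine Finset.prod_nonneg fun F _ => ?_
      split_ifs
      · exact zero_le_one
      · have := hp_le x F; linarith
    · exact le_rfl
  have hαsupp : ∀ x (F : ι), p x F = 1 → ∀ i, i ∉ F.1 → α (p x) i = 0 := by
    intro x F hF i hi
    simp only [α]
    split_ifs
    · refine Finset.prod_eq_zero (Finset.mem_univ F) ?_
      simp [hi, hF]
    · rfl
  have hApos : ∀ x, 0 < A (p x) := by
    intro x
    obtain ⟨v, hv, hxv⟩ : ∃ v ∈ verts K, x.1 v ≠ 0 := by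
      by_contra hcon
      push Not at hcon
      have := hsum x
      rw [Finset.sum_eq_zero hcon] at this
      norm_num at this
    refine Finset.sum_pos' (fun i _ => hα0 x i) ⟨v, hv, ?_⟩
    simp only [α, if_pos hv]
    refine Finset.prod_pos fun F _ => ?_
    split_ifs with hvF
    · exact zero_lt_one
    · have h1 : p x F ≠ 1 := fun h => hxv (hw_supp x F ((hp_one x F).1 h) v hvF)
      have := lt_of_le_of_ne (hp_le x F) h1
      linarith
  let s : (ι → ℝ) → ℕ → ℝ := fun y i => α y i / A y
  have hs_face : ∀ x (F : ι), p x F = 1 → (∀ i, i ∉ F.1 → s (p x) i = 0) ∧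
      ∑ i ∈ F.1, s (p x) i = 1 := by
    intro x F hF
    refine ⟨fun i hi => ?_, ?_⟩
    · simp only [s]; rw [hαsupp x F hF i hi, zero_div]
    · simp only [s]
      rw [← Finset.sum_div, div_eq_one_iff_eq (hApos x).ne']
      exact Finset.sum_subset (hFv F) (fun i _ hi => hαsupp x F hF i hi)
  have hs_mem : ∀ y ∈ range p, s y ∈ realization K := by
    rintro y ⟨x, rfl⟩
    obtain ⟨F, hF⟩ := hex x
    obtain ⟨h1, h2⟩ := hs_face x F ((hp_one x F).2 hF)
    exact ⟨F.1, hFK F, h1, fun i => div_nonneg (hα0 x i) (hApos x).le, h2⟩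
  let sQ : C(range p, realization K) := ⟨fun y => ⟨s y.1, hs_mem y.1 y.2⟩, by
    refine Continuous.subtype_mk (continuous_pi fun i => ?_) _
    refine ((hαc i).comp continuous_subtype_val).div (hAc.comp continuous_subtype_val) ?_
    rintro ⟨y, x, rfl⟩
    exact (hApos x).ne'⟩
  let pQ : C(realization K, range p) := ⟨fun x => ⟨p x, mem_range_self x⟩,
    p.continuous.subtype_mk _⟩
  have hhom : (ContinuousMap.id (realization K)).Homotopic (sQ.comp pQ) := by
    refine homotopic_of_common_face K _ fun x => ?_
    obtain ⟨F, hF⟩ := hex x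
    exact ⟨F.1, hFK F, ⟨hw_supp x F hF, hF⟩, hs_face x F ((hp_one x F).2 hF)⟩
  have hnull : (f.comp (sQ.comp pQ)).Nullhomotopic :=
    null_of_cube (by rw [hcard]; exact hm) p hp (f.comp sQ) _ (fun x => rfl)
  obtain ⟨y, hy⟩ := hnull
  refine ⟨y, ContinuousMap.Homotopic.trans ?_ hy⟩
  exact ContinuousMap.Homotopic.comp (ContinuousMap.Homotopic.refl f) hhom

end Helpers

/-- a finite simplicial complex homotopy equivalent to a
`k`-dimensional sphere has at least `k+2` maximal faces. -/
theorem stmt6 (K : Cx) (k : ℕ) (hK : IsComplex K)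
    (h : Nonempty (ContinuousMap.HomotopyEquiv (realization K)
      (Metric.sphere (0 : EuclideanSpace ℝ (Fin (k + 1))) 1))) :
    k + 2 ≤ mCount K := by
  by_contra hcon
  obtain ⟨e⟩ := h
  have hnull : e.toFun.Nullhomotopic := by
    by_cases hno : ∀ a, ∃ F ∈ facets K, a ∉ F
    · exact null_of_few K k hK (by omega) hno e.toFun
    · push Not at hno
      obtain ⟨a, ha⟩ := hno
      obtain ⟨y, hy⟩ : (Metric.sphere (0 : EuclideanSpace ℝ (Fin (k + 1))) 1).Nonempty :=
        NormedSpace.sphere_nonempty.2 zero_le_one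
      exact null_of_cone K hK a ha (e.invFun ⟨y, hy⟩) e.toFun
  obtain ⟨y, hy⟩ := hnull.comp_left e.invFun
  exact id_sphere_not_null k ⟨y, e.right_inv.symm.trans hy⟩
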